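/- For any aggregation φ and any f₀ : S × A → ℝ, ‖f₀ − T_φ^μ f₀‖_∞ ≤ (1 + γ) ‖f₀ − Q⋆‖_∞ + 2 ε_φ, where ε_φ := min_{g ∈ G_φ} ‖g − Q⋆‖_∞; consequently also ‖f₀ − T_φ^μ f₀‖_{2,μ} ≤ (1 + γ) ‖f₀ − Q⋆‖_∞ + 2 ε_φ. -/

import Mathlib

/-- `V_f(s) := max_a f(s,a)`. -/
noncomputable def Vof {S A : Type*} [Fintype A] [Nonempty A]
    (f : S × A → ℝ) (s : S) : ℝ :=
  Finset.univ.sup' Finset.univ_nonempty (fun a => f (s, a))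

/-- The Bellman optimality operator `(T f)(s,a) = R(s,a) + γ ∑ s', P(s'|s,a) V_f(s')`. -/
noncomputable def bellmanT {S A : Type*} [Fintype S] [Fintype A] [Nonempty A]
    (P : S → A → S → ℝ) (R : S → A → ℝ) (γ : ℝ) (f : S × A → ℝ) : S × A → ℝ :=
  fun q => R q.1 q.2 + γ * ∑ s', P q.1 q.2 s' * Vof f s'

/-- The projected Bellman operator `T_φ^μ`, which averages `T f` over each
aggregation cell with weights proportional to `μ`. -/
noncomputable def projT {S A X : Type*} [Fintype S] [Fintype A] [Nonempty A]
    [DecidableEq X]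
    (P : S → A → S → ℝ) (R : S → A → ℝ) (γ : ℝ)
    (μ : S × A → ℝ) (φ : S × A → X) (f : S × A → ℝ) : S × A → ℝ :=
  fun q => (∑ q', if φ q' = φ q then μ q' * bellmanT P R γ f q' else 0)
         / (∑ q', if φ q' = φ q then μ q' else 0)

/-- `‖f‖_∞ = max_{s,a} |f(s,a)|`. -/
noncomputable def supNorm {S A : Type*} [Fintype S] [Fintype A] [Nonempty S] [Nonempty A]
    (f : S × A → ℝ) : ℝ :=
  Finset.univ.sup' Finset.univ_nonempty (fun q => |f q|)

/-- A function is piecewise constant with respect to an aggregation `φ` if it is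
constant on each aggregation cell; `G_φ` is the class of such functions. -/
def PiecewiseConst {S A X : Type*} (φ : S × A → X) (g : S × A → ℝ) : Prop :=
  ∀ q q' : S × A, φ q = φ q' → g q = g q'

/-- `‖f‖_{2,ν} := (∑_{s,a} ν(s,a) f(s,a)²)^{1/2}`. -/
noncomputable def l2Norm {S A : Type*} [Fintype S] [Fintype A]
    (ν f : S × A → ℝ) : ℝ :=
  Real.sqrt (∑ q : S × A, ν q * (f q) ^ 2)

theorem abs_le_supNorm_aux {S A : Type*} [Fintype S] [Fintype A] [Nonempty S] [Nonempty A]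
    (f : S × A → ℝ) (q : S × A) : |f q| ≤ supNorm f := by
  unfold supNorm
  exact Finset.le_sup' (fun q => |f q|) (Finset.mem_univ q)

theorem Vof_le_aux {S A : Type*} [Fintype A] [Nonempty A]
    (f h : S × A → ℝ) (D : ℝ) (hD : ∀ q, |f q - h q| ≤ D) (s : S) :
    Vof f s ≤ Vof h s + D := by
  unfold Vof
  apply Finset.sup'_le
  intro a _
  have h1 := Finset.le_sup' (fun a => h (s, a)) (Finset.mem_univ a)
  have h2 := (abs_le.mp (hD (s, a))).2
  linarith

theorem bellmanT_le_aux {S A : Type*} [Fintype S] [Fintype A] [Nonempty A]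
    (P : S → A → S → ℝ) (R : S → A → ℝ) (γ : ℝ)
    (hP0 : ∀ s a s', 0 ≤ P s a s') (hP1 : ∀ s a, ∑ s', P s a s' = 1) (hγ0 : 0 ≤ γ)
    (f h : S × A → ℝ) (D : ℝ) (hD : ∀ q, |f q - h q| ≤ D) (q : S × A) :
    bellmanT P R γ f q ≤ bellmanT P R γ h q + γ * D := by
  unfold bellmanT
  have h1 : ∑ s', P q.1 q.2 s' * Vof f s' ≤ ∑ s', P q.1 q.2 s' * Vof h s' + D := by
    calc ∑ s', P q.1 q.2 s' * Vof f s' ≤ ∑ s', P q.1 q.2 s' * (Vof h s' + D) :=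
          Finset.sum_le_sum fun s' _ =>
            mul_le_mul_of_nonneg_left (Vof_le_aux f h D hD s') (hP0 _ _ _)
      _ = _ := by
          simp only [mul_add, Finset.sum_add_distrib, ← Finset.sum_mul, hP1, one_mul]
  have h2 := mul_le_mul_of_nonneg_left h1 hγ0
  linarith

/-- For any aggregation `φ` and any `f₀ : S × A → ℝ`,
`‖f₀ − T_φ^μ f₀‖_∞ ≤ (1 + γ)‖f₀ − Q⋆‖_∞ + 2 ε_φ`, where
`ε_φ := min_{g ∈ G_φ} ‖g − Q⋆‖_∞`; consequently the same bound holds for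
`‖f₀ − T_φ^μ f₀‖_{2,μ}`. -/
theorem stmt13 {S A X : Type*} [Fintype S] [Fintype A] [Nonempty S] [Nonempty A]
    [DecidableEq X]
    (P : S → A → S → ℝ) (R : S → A → ℝ) (Rmax γ : ℝ)
    (hP0 : ∀ s a s', 0 ≤ P s a s') (hP1 : ∀ s a, ∑ s', P s a s' = 1)
    (hR : ∀ s a, 0 ≤ R s a ∧ R s a ≤ Rmax)
    (hγ0 : 0 ≤ γ) (hγ1 : γ < 1)
    (μ : S × A → ℝ) (hμpos : ∀ q, 0 < μ q) (hμsum : ∑ q, μ q = 1)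
    (φ : S × A → X)
    (Qstar : S × A → ℝ) (hQstar : bellmanT P R γ Qstar = Qstar)
    (εφ : ℝ)
    (hεφ : IsLeast {e : ℝ | ∃ g : S × A → ℝ, PiecewiseConst φ g ∧
              supNorm (fun q => g q - Qstar q) = e} εφ)
    (f₀ : S × A → ℝ) :
    supNorm (fun q => f₀ q - projT P R γ μ φ f₀ q) ≤
      (1 + γ) * supNorm (fun q => f₀ q - Qstar q) + 2 * εφ ∧
    l2Norm μ (fun q => f₀ q - projT P R γ μ φ f₀ q) ≤
      (1 + γ) * supNorm (fun q => f₀ q - Qstar q) + 2 * εφ := by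
  obtain ⟨⟨g, hg, hge⟩, -⟩ := hεφ
  set D := supNorm (fun q => f₀ q - Qstar q) with hDdef
  have hD : ∀ q, |f₀ q - Qstar q| ≤ D := fun q =>
    abs_le_supNorm_aux (fun q => f₀ q - Qstar q) q
  have hD' : ∀ q, |Qstar q - f₀ q| ≤ D := fun q => by rw [abs_sub_comm]; exact hD q
  have hG : ∀ q, |g q - Qstar q| ≤ εφ := fun q => by
    rw [← hge]; exact abs_le_supNorm_aux (fun q => g q - Qstar q) q
  have key : ∀ q, |f₀ q - projT P R γ μ φ f₀ q| ≤ (1 + γ) * D + 2 * εφ := by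
    intro q
    have hpt : ∀ q', φ q' = φ q → Qstar q - (γ * D + 2 * εφ) ≤ bellmanT P R γ f₀ q' ∧
        bellmanT P R γ f₀ q' ≤ Qstar q + (γ * D + 2 * εφ) := by
      intro q' hq'
      have a1 := bellmanT_le_aux P R γ hP0 hP1 hγ0 f₀ Qstar D hD q'
      have a2 := bellmanT_le_aux P R γ hP0 hP1 hγ0 Qstar f₀ D hD' q'
      rw [hQstar] at a1 a2
      have a3 := abs_le.mp (hG q)
      have a4 := abs_le.mp (hG q')
      have a5 := hg q' q hq'
      constructor <;> linarith [a3.1, a3.2, a4.1, a4.2]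
    have hpos : 0 < ∑ q', if φ q' = φ q then μ q' else 0 := by
      apply Finset.sum_pos'
      · intro i _
        split_ifs
        · exact (hμpos i).le
        · exact le_rfl
      · exact ⟨q, Finset.mem_univ q, by simpa using hμpos q⟩
    have hlo : Qstar q - (γ * D + 2 * εφ) ≤ projT P R γ μ φ f₀ q := by
      unfold projT
      rw [le_div_iff₀ hpos, Finset.mul_sum]
      apply Finset.sum_le_sum
      intro i _
      split_ifs with hi
      · rw [mul_comm]
        exact mul_le_mul_of_nonneg_left (hpt i hi).1 (hμpos i).le
      · simp
    have hhi : projT P R γ μ φ f₀ q ≤ Qstar q + (γ * D + 2 * εφ) := by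
      unfold projT
      rw [div_le_iff₀ hpos, Finset.mul_sum]
      apply Finset.sum_le_sum
      intro i _
      split_ifs with hi
      · rw [mul_comm (Qstar q + _)]
        exact mul_le_mul_of_nonneg_left (hpt i hi).2 (hμpos i).le
      · simp
    have b := abs_le.mp (hD q)
    rw [abs_le]
    constructor <;> linarith [b.1, b.2]
  refine ⟨?_, ?_⟩
  · rw [supNorm]
    exact Finset.sup'_le _ _ fun q _ => key q
  · have hB : 0 ≤ (1 + γ) * D + 2 * εφ :=
      (abs_nonneg _).trans (key (Classical.arbitrary (S × A)))
    unfold l2Norm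
    rw [Real.sqrt_le_left hB]
    calc ∑ q, μ q * (f₀ q - projT P R γ μ φ f₀ q) ^ 2
        ≤ ∑ q, μ q * ((1 + γ) * D + 2 * εφ) ^ 2 :=
          Finset.sum_le_sum fun q _ => mul_le_mul_of_nonneg_left
            (sq_le_sq.mpr ((key q).trans (le_abs_self _))) (hμpos q).le
      _ = _ := by rw [← Finset.sum_mul, hμsum, one_mul]
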